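/- Let H and K be complex Hilbert spaces, V ⊆ H and W ⊆ K closed subspaces, Q : H ≃ₗᵢ[ℂ] K a unitary operator, and Q₊₊, Q₋₋, Q₊₋, Q₋₊ its compressions. If the off-diagonal compressions Q₊₋ and Q₋₊ are compact operators, then: ker Q₊₊ and ker Q₋₋ are finite-dimensional; the ranges of Q₊₊ and Q₋₋ are closed; and the orthogonal complement of range Q₊₊ in W and the orthogonal complement of range Q₋₋ in Wᗮ are finite-dimensional. -/

import Mathlib

noncomputable section

variable {H K : Type*}
  [NormedAddCommGroup H] [InnerProductSpace ℂ H] [CompleteSpace H]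
  [NormedAddCommGroup K] [InnerProductSpace ℂ K] [CompleteSpace K]

variable {H K : Type*}
  [NormedAddCommGroup H] [InnerProductSpace ℂ H] [CompleteSpace H]
  [NormedAddCommGroup K] [InnerProductSpace ℂ K] [CompleteSpace K]

/-- The compression `Q₊₊ : V → W`, `u ↦ P_W (Q u)`. -/
def Qpp (V : Submodule ℂ H) (W : Submodule ℂ K) [CompleteSpace W] (Q : H ≃ₗᵢ[ℂ] K) :
    V →L[ℂ] W :=
  (Submodule.orthogonalProjectionOnto W).comp (Q.toLinearIsometry.toContinuousLinearMap.comp V.subtypeL)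

/-- The compression `Q₋₋ : Vᗮ → Wᗮ`, `u ↦ P_{Wᗮ} (Q u)`. -/
def Qmm (V : Submodule ℂ H) (W : Submodule ℂ K) [CompleteSpace W] (Q : H ≃ₗᵢ[ℂ] K) :
    Vᗮ →L[ℂ] Wᗮ :=
  (Submodule.orthogonalProjectionOnto Wᗮ).comp (Q.toLinearIsometry.toContinuousLinearMap.comp Vᗮ.subtypeL)

/-- The compression `Q₊₋ : Vᗮ → W`, `u ↦ P_W (Q u)`. -/
def Qpm (V : Submodule ℂ H) (W : Submodule ℂ K) [CompleteSpace W] (Q : H ≃ₗᵢ[ℂ] K) :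
    Vᗮ →L[ℂ] W :=
  (Submodule.orthogonalProjectionOnto W).comp (Q.toLinearIsometry.toContinuousLinearMap.comp Vᗮ.subtypeL)

/-- The compression `Q₋₊ : V → Wᗮ`, `u ↦ P_{Wᗮ} (Q u)`. -/
def Qmp (V : Submodule ℂ H) (W : Submodule ℂ K) [CompleteSpace W] (Q : H ≃ₗᵢ[ℂ] K) :
    V →L[ℂ] Wᗮ :=
  (Submodule.orthogonalProjectionOnto Wᗮ).comp (Q.toLinearIsometry.toContinuousLinearMap.comp V.subtypeL)

/-! A parametrix `S` of `Q`, that is, an inverse modulo compact operators, has diagonal blocks that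
are parametrices of those of `Q`: in `(S Q)₊₊ = S₊₊ Q₊₊ + S₊₋ Q₋₊` and `(Q S)₊₊ = Q₊₊ S₊₊ + Q₊₋ S₋₊`
the last term is compact, and likewise for the other diagonal block. It remains to see that an
operator with a parametrix is Fredholm. A compact operator into a Hilbert space is a norm limit of
operators of finite rank, so by the Neumann series a compact perturbation of the identity is
invertible modulo finite rank; hence an inverse modulo compact operators can be improved to one
modulo finite rank.
-/

open scoped LinearMap.FiniteRangeSetoid

section Atkinson

variable {𝕜 E F : Type*} [RCLike 𝕜]

theorem exists_norm_sub_starProjection_comp_lt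
    [NormedAddCommGroup E] [NormedSpace 𝕜 E] [NormedAddCommGroup F] [InnerProductSpace 𝕜 F]
    {T : E →L[𝕜] F} (hT : IsCompactOperator T) {ε : ℝ} (hε : 0 < ε) :
    ∃ (M : Submodule 𝕜 F) (_ : FiniteDimensional 𝕜 M), ‖T - M.starProjection ∘L T‖ < ε := by
  obtain ⟨B, hB, hTB⟩ := hT.image_closedBall_subset_compact (f := T.toLinearMap) 1
  obtain ⟨net, -, hnet_finite, hB_net⟩ := finite_cover_balls_of_compact hB (half_pos hε)
  have := FiniteDimensional.span_of_finite 𝕜 hnet_finite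
  refine ⟨.span 𝕜 net, this, lt_of_le_of_lt ?_ (half_lt_self hε)⟩
  refine ContinuousLinearMap.opNorm_le_of_unit_norm (half_pos hε).le fun x hx ↦ ?_
  have hTx : T x ∈ B := hTB ⟨x, by simp [hx], rfl⟩
  obtain ⟨y, hy, hTxy⟩ := Set.mem_iUnion₂.mp (hB_net hTx)
  calc ‖T x - (Submodule.span 𝕜 net).starProjection (T x)‖
      = ⨅ z : Submodule.span 𝕜 net, ‖T x - z‖ := Submodule.starProjection_minimal _
    _ ≤ ‖T x - y‖ :=
        ciInf_le ⟨0, Set.forall_mem_range.mpr fun _ ↦ norm_nonneg _⟩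
          (⟨y, Submodule.subset_span hy⟩ : Submodule.span 𝕜 net)
    _ ≤ ε / 2 := (mem_ball_iff_norm.mp hTxy).le

theorem exists_continuousLinearEquiv_equiv_of_isCompactOperator_id_sub
    [NormedAddCommGroup E] [InnerProductSpace 𝕜 E] [CompleteSpace E]
    {T : E →L[𝕜] E} (hT : IsCompactOperator (.id 𝕜 E - T : E →L[𝕜] E)) :
    ∃ e : E ≃L[𝕜] E, T.toLinearMap ≈ (e : E →L[𝕜] E).toLinearMap := by
  obtain ⟨M, _, hM⟩ := exists_norm_sub_starProjection_comp_lt hT one_pos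
  obtain ⟨u, hu⟩ := isUnit_one_sub_of_norm_lt_one hM
  have hu_eq : (u : E →L[𝕜] E) = T + M.starProjection ∘L (.id 𝕜 E - T) := by
    rw [hu, ContinuousLinearMap.one_def]
    abel
  have hsub : T.toLinearMap - (ContinuousLinearEquiv.unitsEquiv 𝕜 E u : E →L[𝕜] E).toLinearMap =
      -(M.subtype ∘ₗ (M.orthogonalProjectionOnto ∘L (.id 𝕜 E - T)).toLinearMap) := by
    ext x
    simp [hu_eq]
  refine ⟨ContinuousLinearEquiv.unitsEquiv 𝕜 E u, ?_⟩
  rw [LinearMap.FiniteRangeSetoid.equiv_iff_hasFiniteRange, hsub]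
  exact (LinearMap.HasFiniteRange.of_finite_dom.comp_right _).neg

theorem isCompactOperator_of_hasFiniteRange
    [NormedAddCommGroup E] [NormedSpace 𝕜 E] [NormedAddCommGroup F] [NormedSpace 𝕜 F]
    {T : E →L[𝕜] F} (hT : T.toLinearMap.HasFiniteRange) : IsCompactOperator T := by
  have : FiniteDimensional 𝕜 T.range := .of_fg hT.fg_range
  have : ProperSpace T.range := FiniteDimensional.proper_rclike 𝕜 T.range
  exact (isCompactOperator_of_locallyCompactSpace_dom T.rangeRestrict).clm_comp T.range.subtypeL

theorem isFredholm_continuousLinearEquiv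
    [NormedAddCommGroup E] [NormedSpace 𝕜 E] [NormedAddCommGroup F] [NormedSpace 𝕜 F]
    (e : E ≃L[𝕜] F) : (e : E →L[𝕜] F).IsFredholm :=
  .of_isQuasiInverse (v := e.symm) e.toLinearEquiv.isQuasiInverse

theorem finiteDimensional_orthogonal_range_of_isFredholm
    [NormedAddCommGroup E] [NormedSpace 𝕜 E] [NormedAddCommGroup F] [InnerProductSpace 𝕜 F]
    {T : E →L[𝕜] F} (hT : T.IsFredholm) :
    FiniteDimensional 𝕜 T.rangeᗮ :=
  .of_fg (hT.finite_coker.fg_of_disjoint T.range.orthogonal_disjoint.symm)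

theorem exists_isCompactOperator_id_sub_of_isFredholm
    [NormedAddCommGroup E] [NormedSpace 𝕜 E] [NormedAddCommGroup F] [NormedSpace 𝕜 F]
    {T : E →L[𝕜] F} (hT : T.IsFredholm) :
    ∃ S : F →L[𝕜] E, IsCompactOperator (.id 𝕜 E - S ∘L T : E →L[𝕜] E) ∧
      IsCompactOperator (.id 𝕜 F - T ∘L S : F →L[𝕜] F) := by
  obtain ⟨S, hST, hTS⟩ := hT.exists_isQuasiInverse
  rw [LinearMap.IsLeftQuasiInverse, Setoid.comm,
    LinearMap.FiniteRangeSetoid.equiv_iff_hasFiniteRange] at hST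
  rw [LinearMap.IsRightQuasiInverse, Setoid.comm,
    LinearMap.FiniteRangeSetoid.equiv_iff_hasFiniteRange] at hTS
  exact ⟨S, isCompactOperator_of_hasFiniteRange hST, isCompactOperator_of_hasFiniteRange hTS⟩

theorem isFredholm_of_isCompactOperator_id_sub
    [NormedAddCommGroup E] [InnerProductSpace 𝕜 E] [CompleteSpace E]
    [NormedAddCommGroup F] [InnerProductSpace 𝕜 F] [CompleteSpace F]
    {T : E →L[𝕜] F} {S : F →L[𝕜] E}
    (hST : IsCompactOperator (.id 𝕜 E - S ∘L T : E →L[𝕜] E))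
    (hTS : IsCompactOperator (.id 𝕜 F - T ∘L S : F →L[𝕜] F)) : T.IsFredholm := by
  obtain ⟨e, he⟩ := exists_continuousLinearEquiv_equiv_of_isCompactOperator_id_sub hST
  obtain ⟨f, hf⟩ := exists_continuousLinearEquiv_equiv_of_isCompactOperator_id_sub hTS
  have he_inv : e.symm.toLinearMap.IsQuasiInverse (S.toLinearMap ∘ₗ T.toLinearMap) :=
    e.toLinearEquiv.isQuasiInverse.congr (Setoid.refl _) he
  have hf_inv : f.symm.toLinearMap.IsQuasiInverse (T.toLinearMap ∘ₗ S.toLinearMap) :=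
    f.toLinearEquiv.isQuasiInverse.congr (Setoid.refl _) hf
  have hS_left : (f.symm.toLinearMap ∘ₗ T.toLinearMap).IsLeftQuasiInverse S.toLinearMap := hf_inv.1
  have hT_left : (e.symm.toLinearMap ∘ₗ S.toLinearMap).IsLeftQuasiInverse T.toLinearMap := he_inv.1
  have hT_right : (e.symm.toLinearMap ∘ₗ S.toLinearMap).IsRightQuasiInverse T.toLinearMap :=
    .of_comp_right hS_left he_inv.2
  exact .of_isQuasiInverse (v := (e.symm : E →L[𝕜] E) ∘L S) ⟨hT_left, hT_right⟩

end Atkinson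

section Compression

variable {𝕜 E F G : Type*} [RCLike 𝕜]
  [NormedAddCommGroup E] [InnerProductSpace 𝕜 E]
  [NormedAddCommGroup F] [InnerProductSpace 𝕜 F]
  [NormedAddCommGroup G] [InnerProductSpace 𝕜 G]

/-- The compression `V → W`, `v ↦ P_W (T v)`, of an operator `T`: its block from `V` to `W`.
For a unitary `Q`, the operators `Qpp`, `Qmm`, `Qpm` and `Qmp` are compressions definitionally. -/
def compression (T : E →L[𝕜] F) (V : Submodule 𝕜 E) (W : Submodule 𝕜 F)
    [W.HasOrthogonalProjection] : V →L[𝕜] W :=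
  W.orthogonalProjectionOnto ∘L T ∘L V.subtypeL

theorem isCompactOperator_compression {T : E →L[𝕜] F} (hT : IsCompactOperator T)
    (V : Submodule 𝕜 E) (W : Submodule 𝕜 F) [W.HasOrthogonalProjection] :
    IsCompactOperator (compression T V W) :=
  (hT.comp_clm V.subtypeL).clm_comp W.orthogonalProjectionOnto

theorem compression_comp_add_compression_orthogonal_comp (S : F →L[𝕜] G) (T : E →L[𝕜] F)
    (V : Submodule 𝕜 E) (W : Submodule 𝕜 F) (X : Submodule 𝕜 G)
    [W.HasOrthogonalProjection] [X.HasOrthogonalProjection] :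
    compression S W X ∘L compression T V W + compression S Wᗮ X ∘L compression T V Wᗮ =
      compression (S ∘L T) V X := by
  ext v
  simp [compression]

theorem id_sub_compression_comp_compression (S : F →L[𝕜] E) (T : E →L[𝕜] F)
    (V : Submodule 𝕜 E) (W : Submodule 𝕜 F)
    [V.HasOrthogonalProjection] [W.HasOrthogonalProjection] :
    .id 𝕜 V - compression S W V ∘L compression T V W =
      compression (.id 𝕜 E - S ∘L T) V V + compression S Wᗮ V ∘L compression T V Wᗮ := by
  have hid : compression (.id 𝕜 E - S ∘L T) V V = .id 𝕜 V - compression (S ∘L T) V V := by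
    ext v
    simp [compression]
  rw [hid, ← compression_comp_add_compression_orthogonal_comp S T V W V]
  abel

theorem isFredholm_compression {T : E →L[𝕜] F} (hT : T.IsFredholm)
    {V V' : Submodule 𝕜 E} {W W' : Submodule 𝕜 F} [CompleteSpace V] [CompleteSpace W]
    [W'.HasOrthogonalProjection] (hV : Vᗮ = V') (hW : Wᗮ = W')
    (hVW' : IsCompactOperator (compression T V W'))
    (hV'W : IsCompactOperator (compression T V' W)) :
    (compression T V W).IsFredholm := by
  subst hV hW
  obtain ⟨S, hST, hTS⟩ := exists_isCompactOperator_id_sub_of_isFredholm hT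
  refine isFredholm_of_isCompactOperator_id_sub (S := compression S W V) ?_ ?_
  · rw [id_sub_compression_comp_compression]
    exact (isCompactOperator_compression hST V V).add (hVW'.clm_comp (compression S Wᗮ V))
  · rw [id_sub_compression_comp_compression]
    exact (isCompactOperator_compression hTS W W).add (hV'W.comp_clm (compression S W Vᗮ))

theorem diagonal_compressions_fredholm_data_general [CompleteSpace E] [CompleteSpace F]
    {T : E →L[𝕜] F} (hT : T.IsFredholm)
    (V : Submodule 𝕜 E) [CompleteSpace V] (W : Submodule 𝕜 F) [CompleteSpace W]
    (hpm : IsCompactOperator (compression T Vᗮ W))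
    (hmp : IsCompactOperator (compression T V Wᗮ)) :
    (compression T V W).IsFredholm ∧ (compression T Vᗮ Wᗮ).IsFredholm :=
  ⟨isFredholm_compression hT rfl rfl hmp hpm,
    isFredholm_compression hT V.orthogonal_orthogonal W.orthogonal_orthogonal hpm hmp⟩

end Compression

/-- if the off-diagonal compressions `Q₊₋`, `Q₋₊` of a unitary `Q` are
compact, then the kernels of the diagonal compressions are finite-dimensional, their
ranges are closed, and the orthogonal complements of their ranges are
finite-dimensional. -/
theorem diagonal_compressions_fredholm_data
    (V : Submodule ℂ H) [CompleteSpace V] (W : Submodule ℂ K) [CompleteSpace W]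
    (Q : H ≃ₗᵢ[ℂ] K)
    (hpm : IsCompactOperator (Qpm V W Q)) (hmp : IsCompactOperator (Qmp V W Q)) :
    FiniteDimensional ℂ (LinearMap.ker (Qpp V W Q).toLinearMap) ∧
    FiniteDimensional ℂ (LinearMap.ker (Qmm V W Q).toLinearMap) ∧
    IsClosed (LinearMap.range (Qpp V W Q).toLinearMap : Set W) ∧
    IsClosed (LinearMap.range (Qmm V W Q).toLinearMap : Set Wᗮ) ∧
    FiniteDimensional ℂ (LinearMap.range (Qpp V W Q).toLinearMap)ᗮ ∧
    FiniteDimensional ℂ (LinearMap.range (Qmm V W Q).toLinearMap)ᗮ := by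
  obtain ⟨hpp, hmm⟩ := diagonal_compressions_fredholm_data_general
    (isFredholm_continuousLinearEquiv Q.toContinuousLinearEquiv) V W hpm hmp
  exact ⟨hpp.finite_ker, hmm.finite_ker, hpp.isClosed_range, hmm.isClosed_range,
    finiteDimensional_orthogonal_range_of_isFredholm hpp,
    finiteDimensional_orthogonal_range_of_isFredholm hmm⟩

end
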